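/- (Energy lower bound) Let n ≥ 1, m ≥ 2, and let u = (u_1,…,u_m) be a solution of system (S) on ℝⁿ with H̃(u(x)) ≤ 0 for all x ∈ ℝⁿ, and let α ∈ ℝ satisfy α ≥ 2sΦ'(s)/Φ(s) for every s > 0. Then, with C := ∫_{B_1} [ ∑_{i=1}^m Φ(|∇u_i|²) − 2H̃(u) ] dx ≥ 0 (a constant independent of R), one has for all R > 1: ∫_{B_R} [ ∑_{i=1}^m Φ(|∇u_i|²) − 2H̃(u) ] dx ≥ C R^{n−α}. -/

import Mathlib

open MeasureTheory Metric Finset Filter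
open scoped RealInnerProductSpace

noncomputable section

/-- Divergence of a vector field on Euclidean space. -/
def vdiv {n : ℕ} (F : EuclideanSpace ℝ (Fin n) → EuclideanSpace ℝ (Fin n))
    (x : EuclideanSpace ℝ (Fin n)) : ℝ :=
  ∑ i, fderiv ℝ F x (EuclideanSpace.single i 1) i

/-!
Let `e = ∑ᵢ Φ(|∇uᵢ|²) - 2H̃(u)` and `E(r) = ∫_{B_r} e`. Rescaling `B_r` to the unit ball gives
`r d/dr (r^(α - n) E(r)) = r^(α - n) ∫_{B_r} (x·∇e + α e)`, so it is enough that the integral on the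
right is nonnegative. The field `W = ∑ᵢ 2 (x·∇uᵢ) Φ'(|∇uᵢ|²) ∇uᵢ` satisfies, by the equation,
`div W = x·∇e + ∑ᵢ 2 |∇uᵢ|² Φ'(|∇uᵢ|²)`, which is at most `x·∇e + α e` by the choice of `α` and the
sign of `H̃(u)`. Moreover `x·W ≥ 0`: the field points out of every ball, hence `∫_{B_r} div W ≥ 0`.
-/

open scoped Topology Gradient

lemma nonneg_of_forall_pos_nonneg {f : ℝ → ℝ} (hf : Continuous f) (h : ∀ s, 0 < s → 0 ≤ f s)
    {s : ℝ} (hs : 0 ≤ s) : 0 ≤ f s :=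
  closure_minimal h (isClosed_le continuous_const hf) (closure_Ioi (0 : ℝ) ▸ hs)

section Dilation

lemma hasDerivAt_setIntegral_of_continuous {X F : Type*} [TopologicalSpace X] [MeasurableSpace X]
    [OpensMeasurableSpace X] {μ : Measure X} [IsFiniteMeasureOnCompacts μ]
    [NormedAddCommGroup F] [NormedSpace ℝ F] [SecondCountableTopologyEither X F]
    {s K : Set X} (hs : MeasurableSet s) (hK : IsCompact K) (hsK : s ⊆ K) {f f' : ℝ → X → F}
    (hf : ∀ t, Continuous (f t)) (hf' : Continuous (Function.uncurry f'))
    (hderiv : ∀ t x, HasDerivAt (f · x) (f' t x) t) (t : ℝ) :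
    HasDerivAt (fun t => ∫ x in s, f t x ∂μ) (∫ x in s, f' t x ∂μ) t := by
  have hμs : μ s < ⊤ := (measure_mono hsK).trans_lt hK.measure_lt_top
  have bounded_on_s {g : X → F} {C : ℝ} (hg : ∀ x ∈ K, ‖g x‖ ≤ C) :
      ∀ᵐ x ∂μ.restrict s, ‖g x‖ ≤ C :=
    (ae_restrict_iff' hs).2 (Eventually.of_forall fun x hx => hg x (hsK hx))
  obtain ⟨C₀, hC₀⟩ := hK.exists_bound_of_continuousOn (hf t).continuousOn
  obtain ⟨C, hC⟩ := ((isCompact_closedBall t 1).prod hK).exists_bound_of_continuousOn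
    hf'.continuousOn
  refine (hasDerivAt_integral_of_dominated_loc_of_deriv_le (bound := fun _ => C)
    (closedBall_mem_nhds t one_pos) (Eventually.of_forall fun r => (hf r).aestronglyMeasurable)
    (Measure.integrableOn_of_bounded hμs.ne (hf t).aestronglyMeasurable (bounded_on_s hC₀))
    (hf'.comp (by fun_prop : Continuous fun x => (t, x))).aestronglyMeasurable ?_
    (integrableOn_const hμs.ne) (Eventually.of_forall fun x r _ => hderiv r x)).2
  exact (ae_restrict_iff' hs).2
    (Eventually.of_forall fun x hx r hr => hC (r, x) ⟨hr, hsK hx⟩)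

variable {E : Type*} [NormedAddCommGroup E] [NormedSpace ℝ E] [FiniteDimensional ℝ E]
  [MeasurableSpace E] [BorelSpace E] {μ : Measure E}

lemma integrableOn_ball_of_continuous {F : Type*} [NormedAddCommGroup F]
    [IsFiniteMeasureOnCompacts μ] {f : E → F} (hf : Continuous f) (c : E) (r : ℝ) :
    IntegrableOn f (ball c r) μ :=
  have := FiniteDimensional.proper_real E
  (hf.continuousOn.integrableOn_compact (isCompact_closedBall c r)).mono_set ball_subset_closedBall

variable [μ.IsAddHaarMeasure]

lemma setIntegral_ball_comp_smul {F : Type*} [NormedAddCommGroup F] [NormedSpace ℝ F] (f : E → F)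
    {r : ℝ} (hr : 0 < r) :
    ∫ x in ball 0 1, f (r • x) ∂μ = (r ^ Module.finrank ℝ E)⁻¹ • ∫ x in ball 0 r, f x ∂μ := by
  rw [Measure.setIntegral_comp_smul_of_pos μ f _ hr, smul_unitBall_of_pos hr]

lemma hasDerivAt_setIntegral_ball_comp_smul {F : Type*} [NormedAddCommGroup F] [NormedSpace ℝ F]
    {f : E → F} (hf : ContDiff ℝ 1 f) (t : ℝ) :
    HasDerivAt (fun t : ℝ => ∫ x in ball 0 1, f (t • x) ∂μ)
      (∫ x in ball 0 1, fderiv ℝ f (t • x) x ∂μ) t := by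
  have := FiniteDimensional.proper_real E
  have hf' : Continuous (fderiv ℝ f) := hf.continuous_fderiv one_ne_zero
  refine hasDerivAt_setIntegral_of_continuous measurableSet_ball (isCompact_closedBall 0 1)
    ball_subset_closedBall (fun t => hf.continuous.comp (continuous_const_smul t))
    (f' := fun t x => fderiv ℝ f (t • x) x) ?_ (fun r x => ?_) t
  · exact (hf'.comp (continuous_fst.smul continuous_snd)).clm_apply continuous_snd
  · have hline : HasDerivAt (fun r : ℝ => r • x) x r := by
      simpa only [id_eq, one_smul] using (hasDerivAt_id r).smul_const x
    exact (hf.differentiable one_ne_zero (r • x)).hasFDerivAt.comp_hasDerivAt r hline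

lemma monotoneOn_rpow_mul_setIntegral_ball {f : E → ℝ} (hf : ContDiff ℝ 1 f) (a : ℝ)
    (h : ∀ r, 0 < r → 0 ≤ ∫ x in ball 0 r, (fderiv ℝ f x x + a * f x) ∂μ) :
    MonotoneOn (fun r => r ^ (a - Module.finrank ℝ E) * ∫ x in ball 0 r, f x ∂μ) (Set.Ioi 0) := by
  set I : ℝ → ℝ := fun r => ∫ x in ball 0 1, f (r • x) ∂μ with hI
  set I' : ℝ → ℝ := fun r => ∫ x in ball 0 1, fderiv ℝ f (r • x) x ∂μ
  have rescale : Set.EqOn (fun r => r ^ a * I r)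
      (fun r => r ^ (a - Module.finrank ℝ E) * ∫ x in ball 0 r, f x ∂μ) (Set.Ioi 0) := by
    intro r (hr : 0 < r)
    simp only [hI, setIntegral_ball_comp_smul f hr, Real.rpow_sub_natCast hr.ne', smul_eq_mul]
    ring
  have hderiv (r : ℝ) (hr : 0 < r) :
      HasDerivAt (fun r => r ^ a * I r) (a * r ^ (a - 1) * I r + r ^ a * I' r) r :=
    (Real.hasDerivAt_rpow_const (Or.inl hr.ne')).mul (hasDerivAt_setIntegral_ball_comp_smul hf r)
  have hnonneg (r : ℝ) (hr : 0 < r) : 0 ≤ r * I' r + a * I r := by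
    calc 0 ≤ (r ^ Module.finrank ℝ E)⁻¹ • ∫ x in ball 0 r, (fderiv ℝ f x x + a * f x) ∂μ :=
          smul_nonneg (by positivity) (h r hr)
      _ = ∫ x in ball 0 1, (r * fderiv ℝ f (r • x) x + a * f (r • x)) ∂μ := by
          simp only [← setIntegral_ball_comp_smul _ hr, map_smul, smul_eq_mul]
      _ = r * I' r + a * I r := by
          rw [integral_add, integral_const_mul, integral_const_mul] <;>
            exact integrableOn_ball_of_continuous (by fun_prop) 0 1
  refine MonotoneOn.congr (monotoneOn_of_deriv_nonneg (convex_Ioi 0)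
    (fun r hr => (hderiv r hr).continuousAt.continuousWithinAt)
    (fun r hr => (hderiv r (interior_subset hr)).differentiableAt.differentiableWithinAt)
    fun r hr => ?_) rescale
  replace hr : 0 < r := interior_subset hr
  calc 0 ≤ r ^ (a - 1) * (r * I' r + a * I r) :=
        mul_nonneg (Real.rpow_nonneg hr.le _) (hnonneg r hr)
    _ = a * r ^ (a - 1) * I r + r ^ a * I' r := by
        rw [Real.rpow_sub_one hr.ne']
        field_simp
        ring
    _ = deriv (fun r => r ^ a * I r) r := (hderiv r hr).deriv.symm

end Dilation

section BallCutoff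

variable {E : Type*} [NormedAddCommGroup E]

/-- A smooth radially nonincreasing cutoff function with values in `[0, 1]`, positive exactly on
the ball of radius `r ≥ 0` around the origin if `c > 0`. As `c → ∞` it tends to the indicator of
that ball. -/
def ballCutoff (c r : ℝ) (x : E) : ℝ :=
  Real.smoothTransition (c * (r ^ 2 - ‖x‖ ^ 2))

lemma continuous_ballCutoff (c r : ℝ) : Continuous (ballCutoff c r : E → ℝ) :=
  Real.smoothTransition.continuous.comp (by fun_prop)

lemma abs_ballCutoff_le_one (c r : ℝ) (x : E) : |ballCutoff c r x| ≤ 1 :=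
  (abs_of_nonneg (Real.smoothTransition.nonneg _)).trans_le (Real.smoothTransition.le_one _)

lemma ballCutoff_eq_zero {c r : ℝ} (hc : 0 ≤ c) (hr : 0 ≤ r) {x : E} (hx : x ∉ ball 0 r) :
    ballCutoff c r x = 0 := by
  rw [mem_ball_zero_iff, not_lt] at hx
  exact Real.smoothTransition.zero_of_nonpos
    (mul_nonpos_of_nonneg_of_nonpos hc (sub_nonpos.2 (pow_le_pow_left₀ hr hx 2)))

lemma tendsto_ballCutoff_mul {r : ℝ} (hr : 0 ≤ r) (f : E → ℝ) (x : E) :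
    Tendsto (fun c => ballCutoff c r x * f x) atTop (𝓝 ((ball 0 r).indicator f x)) := by
  by_cases hx : x ∈ ball 0 r
  · have hpos : 0 < r ^ 2 - ‖x‖ ^ 2 :=
      sub_pos.2 (pow_lt_pow_left₀ (mem_ball_zero_iff.1 hx) (norm_nonneg x) two_ne_zero)
    rw [Set.indicator_of_mem hx]
    refine tendsto_const_nhds.congr' ?_
    filter_upwards [eventually_ge_atTop (r ^ 2 - ‖x‖ ^ 2)⁻¹] with c hc
    rw [ballCutoff, Real.smoothTransition.one_of_one_le ((inv_le_iff_one_le_mul₀ hpos).1 hc),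
      one_mul]
  · rw [Set.indicator_of_notMem hx]
    refine tendsto_const_nhds.congr' ?_
    filter_upwards [eventually_ge_atTop 0] with c hc
    rw [ballCutoff_eq_zero hc hr hx, zero_mul]

section Integral

variable [MeasurableSpace E] [BorelSpace E] {μ : Measure E}

lemma tendsto_integral_ballCutoff_mul {r : ℝ} (hr : 0 ≤ r) {f : E → ℝ}
    (hfm : AEStronglyMeasurable f μ) (hf : IntegrableOn f (ball 0 r) μ) :
    Tendsto (fun c => ∫ x, ballCutoff c r x * f x ∂μ) atTop (𝓝 (∫ x in ball 0 r, f x ∂μ)) := by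
  rw [← integral_indicator measurableSet_ball]
  refine tendsto_integral_filter_of_dominated_convergence (fun x => ‖(ball 0 r).indicator f x‖)
    (Eventually.of_forall fun c => ?_) ?_ (hf.integrable_indicator measurableSet_ball).norm
    (Eventually.of_forall (tendsto_ballCutoff_mul hr f))
  · exact (continuous_ballCutoff c r).aestronglyMeasurable.mul hfm
  · filter_upwards [eventually_ge_atTop 0] with c hc
    refine Eventually.of_forall fun x => ?_
    by_cases hx : x ∈ ball 0 r
    · rw [Set.indicator_of_mem hx, norm_mul]
      exact mul_le_of_le_one_left (norm_nonneg _) (abs_ballCutoff_le_one c r x)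
    · rw [Set.indicator_of_notMem hx, ballCutoff_eq_zero hc hr hx, zero_mul]

end Integral

variable [InnerProductSpace ℝ E]

lemma contDiff_ballCutoff (c r : ℝ) : ContDiff ℝ 1 (ballCutoff c r : E → ℝ) :=
  (Real.smoothTransition.contDiff (n := 1)).comp
    (contDiff_const.mul (contDiff_const.sub (contDiff_norm_sq ℝ)))

lemma fderiv_ballCutoff_nonpos {c : ℝ} (hc : 0 ≤ c) (r : ℝ) {x v : E} (hxv : 0 ≤ ⟪x, v⟫) :
    fderiv ℝ (ballCutoff c r) x v ≤ 0 := by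
  have harg : HasFDerivAt (fun x : E => c * (r ^ 2 - ‖x‖ ^ 2)) _ x :=
    ((hasStrictFDerivAt_norm_sq x).hasFDerivAt.const_sub (r ^ 2)).const_mul c
  have hcutoff := (Real.smoothTransition.contDiff (n := 1)).differentiable one_ne_zero
    (c * (r ^ 2 - ‖x‖ ^ 2)) |>.hasDerivAt.comp_hasFDerivAt x harg
  have happly : fderiv ℝ (ballCutoff c r) x v =
      deriv Real.smoothTransition (c * (r ^ 2 - ‖x‖ ^ 2)) * (c * -(2 * ⟪x, v⟫)) := by
    rw [show fderiv ℝ (ballCutoff c r) x = _ from hcutoff.fderiv]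
    simp
  rw [happly]
  exact mul_nonpos_of_nonneg_of_nonpos Real.smoothTransition.monotone.deriv_nonneg
    (mul_nonpos_of_nonneg_of_nonpos hc (by linarith))

end BallCutoff

section Divergence

variable {n : ℕ} {V : EuclideanSpace ℝ (Fin n) → EuclideanSpace ℝ (Fin n)}

lemma sum_apply_single_mul (L : EuclideanSpace ℝ (Fin n) →L[ℝ] ℝ) (v : EuclideanSpace ℝ (Fin n)) :
    ∑ i, L (EuclideanSpace.single i 1) * v i = L v := by
  conv_rhs => rw [← (EuclideanSpace.basisFun (Fin n) ℝ).sum_repr v]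
  simp [mul_comm]

lemma vdiv_smul {f : EuclideanSpace ℝ (Fin n) → ℝ} {x : EuclideanSpace ℝ (Fin n)}
    (hf : DifferentiableAt ℝ f x) (hV : DifferentiableAt ℝ V x) :
    vdiv (fun y => f y • V y) x = f x * vdiv V x + fderiv ℝ f x (V x) := by
  rw [← sum_apply_single_mul (fderiv ℝ f x) (V x), vdiv, vdiv, fderiv_fun_smul hf hV,
    Finset.mul_sum, ← Finset.sum_add_distrib]
  simp

lemma continuous_vdiv (hV : ContDiff ℝ 1 V) : Continuous (vdiv V) :=
  continuous_finsetSum _ fun i _ => (EuclideanSpace.proj (𝕜 := ℝ) i).continuous.comp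
    ((hV.continuous_fderiv one_ne_zero).clm_apply continuous_const)

lemma hasCompactSupport_vdiv (hVc : HasCompactSupport V) : HasCompactSupport (vdiv V) :=
  (hVc.fderiv (𝕜 := ℝ)).comp_left
    (g := fun L : EuclideanSpace ℝ (Fin n) →L[ℝ] EuclideanSpace ℝ (Fin n) =>
      ∑ i, L (EuclideanSpace.single i 1) i) (by simp)

lemma integral_vdiv_eq_zero (hV : ContDiff ℝ 1 V) (hVc : HasCompactSupport V) :
    ∫ x, vdiv V x = 0 := by
  have hint (v : EuclideanSpace ℝ (Fin n)) : Integrable fun x => fderiv ℝ V x v :=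
    ((hV.continuous_fderiv one_ne_zero).clm_apply continuous_const).integrable_of_hasCompactSupport
      (hVc.fderiv_apply (𝕜 := ℝ) v)
  have hzero (v : EuclideanSpace ℝ (Fin n)) : ∫ x, fderiv ℝ V x v = 0 := by
    simpa using integral_smul_fderiv_eq_neg_fderiv_smul_of_integrable (μ := volume)
      (f := fun _ : EuclideanSpace ℝ (Fin n) => (1 : ℝ)) (g := V) (v := v) (by simp)
      (by simpa using hint v)
      (by simpa using hV.continuous.integrable_of_hasCompactSupport hVc) (by simp)
      fun x _ => hV.differentiable one_ne_zero x
  have hcoord (i : Fin n) : ∫ x, fderiv ℝ V x (EuclideanSpace.single i 1) i = 0 :=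
    ((EuclideanSpace.proj (𝕜 := ℝ) i).integral_comp_comm (hint _)).trans (by simp [hzero])
  calc ∫ x, vdiv V x = ∑ i, ∫ x, fderiv ℝ V x (EuclideanSpace.single i 1) i :=
        integral_finsetSum _ fun i _ => (EuclideanSpace.proj (𝕜 := ℝ) i).integrable_comp (hint _)
    _ = 0 := Finset.sum_eq_zero fun i _ => hcoord i

lemma integral_ballCutoff_mul_vdiv_nonneg (hV : ContDiff ℝ 1 V) (hout : ∀ x, 0 ≤ ⟪x, V x⟫)
    {c r : ℝ} (hc : 0 ≤ c) (hr : 0 ≤ r) : 0 ≤ ∫ x, ballCutoff c r x * vdiv V x := by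
  have hφ := contDiff_ballCutoff (E := EuclideanSpace ℝ (Fin n)) c r
  have hφc : HasCompactSupport (ballCutoff c r : EuclideanSpace ℝ (Fin n) → ℝ) :=
    HasCompactSupport.intro (isCompact_closedBall 0 r) fun x hx =>
      ballCutoff_eq_zero hc hr fun hx' => hx (ball_subset_closedBall hx')
  have hφV : ContDiff ℝ 1 fun x => ballCutoff c r x • V x := hφ.smul hV
  have hφVc : HasCompactSupport fun x => ballCutoff c r x • V x := hφc.smul_right
  rw [← integral_vdiv_eq_zero hφV hφVc]
  refine integral_mono ((continuous_vdiv hφV).integrable_of_hasCompactSupport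
      (hasCompactSupport_vdiv hφVc))
    ((hφ.continuous.mul (continuous_vdiv hV)).integrable_of_hasCompactSupport hφc.mul_right)
    fun x => ?_
  rw [vdiv_smul (hφ.differentiable one_ne_zero x) (hV.differentiable one_ne_zero x)]
  exact add_le_of_nonpos_right (fderiv_ballCutoff_nonpos hc r (hout x))

lemma setIntegral_ball_vdiv_nonneg (hV : ContDiff ℝ 1 V) (hout : ∀ x, 0 ≤ ⟪x, V x⟫) (r : ℝ) :
    0 ≤ ∫ x in ball 0 r, vdiv V x := by
  rcases lt_or_ge r 0 with hr | hr
  · simp [ball_eq_empty.2 hr.le]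
  have hdiv := continuous_vdiv hV
  refine ge_of_tendsto (tendsto_integral_ballCutoff_mul hr hdiv.aestronglyMeasurable
    (integrableOn_ball_of_continuous hdiv 0 r)) ?_
  filter_upwards [eventually_ge_atTop 0] with c hc
  exact integral_ballCutoff_mul_vdiv_nonneg hV hout hc hr

end Divergence

section Gradient

variable {E : Type*} [NormedAddCommGroup E] [InnerProductSpace ℝ E] [CompleteSpace E] {f : E → ℝ}

lemma contDiff_gradient (hf : ContDiff ℝ 2 f) : ContDiff ℝ 1 (∇ f) :=
  (InnerProductSpace.toDual ℝ E).symm.contDiff.comp (hf.fderiv_right (by norm_num))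

lemma differentiable_gradient (hf : ContDiff ℝ 2 f) : Differentiable ℝ (∇ f) :=
  (contDiff_gradient hf).differentiable one_ne_zero

lemma inner_fderiv_gradient_comm (hf : ContDiff ℝ 2 f) (x v w : E) :
    ⟪fderiv ℝ (∇ f) x v, w⟫ = ⟪fderiv ℝ (∇ f) x w, v⟫ := by
  have hessian (v w : E) : ⟪fderiv ℝ (∇ f) x v, w⟫ = fderiv ℝ (fderiv ℝ f) x v w := by
    have hD : fderiv ℝ f = fun y => innerSL ℝ (∇ f y) := by
      ext y z
      simp only [innerSL_apply_apply, inner_gradient_left]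
    have hcomp : HasFDerivAt (fun y => innerSL ℝ (∇ f y)) _ x :=
      (innerSL ℝ (E := E)).hasFDerivAt.comp x (differentiable_gradient hf x).hasFDerivAt
    rw [hD, hcomp.fderiv]
    rfl
  rw [hessian, hessian]
  exact hf.contDiffAt.isSymmSndFDerivAt (by simp) v w

variable {Φ : ℝ → ℝ}

lemma contDiff_comp_norm_gradient_sq (hΦ : ContDiff ℝ 1 Φ) (hf : ContDiff ℝ 2 f) :
    ContDiff ℝ 1 fun x => Φ (‖∇ f x‖ ^ 2) :=
  hΦ.comp ((contDiff_gradient hf).norm_sq ℝ)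

lemma fderiv_comp_norm_gradient_sq (hΦ : Differentiable ℝ Φ) (hf : ContDiff ℝ 2 f) (x v : E) :
    fderiv ℝ (fun y => Φ (‖∇ f y‖ ^ 2)) x v =
      deriv Φ (‖∇ f x‖ ^ 2) * (2 * ⟪∇ f x, fderiv ℝ (∇ f) x v⟫) := by
  have h : HasFDerivAt (fun y => Φ (‖∇ f y‖ ^ 2)) _ x :=
    (hΦ _).hasDerivAt.comp_hasFDerivAt x (differentiable_gradient hf x).hasFDerivAt.norm_sq
  rw [h.fderiv]
  simp

lemma fderiv_inner_gradient_self (hf : ContDiff ℝ 2 f) (x v : E) :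
    fderiv ℝ (fun y => ⟪∇ f y, y⟫) x v = ⟪∇ f x, v⟫ + ⟪fderiv ℝ (∇ f) x v, x⟫ := by
  simpa using fderiv_inner_apply ℝ (differentiable_gradient hf x) differentiableAt_id v

end Gradient

section Flux

variable {E : Type*} [NormedAddCommGroup E] [InnerProductSpace ℝ E] [CompleteSpace E]
  {Φ : ℝ → ℝ} {f : E → ℝ}

/-- The flux `Φ'(|∇f|²)∇f`, whose divergence is the quasilinear operator of the system. -/
def flux (Φ : ℝ → ℝ) (f : E → ℝ) (x : E) : E :=
  deriv Φ (‖∇ f x‖ ^ 2) • ∇ f x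

/-- The field `2 (x·∇f) Φ'(|∇f|²)∇f`: the flux of `f`, weighted by twice the derivative of `f` along
the dilations. It is the part of the Pohozaev field of `f` that points outwards. -/
def dilationFlux (Φ : ℝ → ℝ) (f : E → ℝ) (x : E) : E :=
  (2 * ⟪∇ f x, x⟫) • flux Φ f x

lemma contDiff_flux (hΦ : ContDiff ℝ 2 Φ) (hf : ContDiff ℝ 2 f) : ContDiff ℝ 1 (flux Φ f) :=
  (contDiff_comp_norm_gradient_sq (hΦ.deriv' (n := 1)) hf).smul (contDiff_gradient hf)

lemma contDiff_two_mul_inner_gradient_self (hf : ContDiff ℝ 2 f) :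
    ContDiff ℝ 1 fun x => 2 * ⟪∇ f x, x⟫ :=
  contDiff_const.mul ((contDiff_gradient hf).inner ℝ contDiff_id)

lemma contDiff_dilationFlux (hΦ : ContDiff ℝ 2 Φ) (hf : ContDiff ℝ 2 f) :
    ContDiff ℝ 1 (dilationFlux Φ f) :=
  (contDiff_two_mul_inner_gradient_self hf).smul (contDiff_flux hΦ hf)

lemma inner_dilationFlux_nonneg {x : E} (hΦ' : 0 ≤ deriv Φ (‖∇ f x‖ ^ 2)) :
    0 ≤ ⟪x, dilationFlux Φ f x⟫ := by
  have h : ⟪x, dilationFlux Φ f x⟫ = 2 * deriv Φ (‖∇ f x‖ ^ 2) * ⟪∇ f x, x⟫ ^ 2 := by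
    rw [dilationFlux, flux, inner_smul_right, inner_smul_right, real_inner_comm]
    ring
  rw [h]
  positivity

lemma vdiv_dilationFlux {n : ℕ} {f : EuclideanSpace ℝ (Fin n) → ℝ} (hΦ : ContDiff ℝ 2 Φ)
    (hf : ContDiff ℝ 2 f) (x : EuclideanSpace ℝ (Fin n)) :
    vdiv (dilationFlux Φ f) x = 2 * ⟪∇ f x, x⟫ * vdiv (flux Φ f) x
      + 2 * ‖∇ f x‖ ^ 2 * deriv Φ (‖∇ f x‖ ^ 2) + fderiv ℝ (fun y => Φ (‖∇ f y‖ ^ 2)) x x := by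
  have hweight : fderiv ℝ (fun y => 2 * ⟪∇ f y, y⟫) x (flux Φ f x) =
      2 * (⟪∇ f x, flux Φ f x⟫ + ⟪fderiv ℝ (∇ f) x (flux Φ f x), x⟫) := by
    rw [fderiv_const_mul ((differentiable_gradient hf x).inner ℝ differentiableAt_fun_id),
      _root_.smul_apply, fderiv_inner_gradient_self hf, smul_eq_mul]
  have hdiv : vdiv (dilationFlux Φ f) x = _ :=
    vdiv_smul ((contDiff_two_mul_inner_gradient_self hf).differentiable one_ne_zero x)
      ((contDiff_flux hΦ hf).differentiable one_ne_zero x)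
  rw [hdiv, hweight, fderiv_comp_norm_gradient_sq (hΦ.differentiable two_ne_zero) hf,
    inner_fderiv_gradient_comm hf, flux, inner_smul_right, inner_smul_right,
    real_inner_self_eq_norm_sq, real_inner_comm (∇ f x)]
  ring

end Flux

section Energy

variable {ι : Type*} [Fintype ι] {Φ : ℝ → ℝ} {G : (ι → ℝ) → ℝ}

lemma fderiv_comp_pi_apply [DecidableEq ι] {E : Type*} [NormedAddCommGroup E] [NormedSpace ℝ E]
    {u : ι → E → ℝ} {x : E} (hG : DifferentiableAt ℝ G fun j => u j x)
    (hu : ∀ i, DifferentiableAt ℝ (u i) x) (v : E) :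
    fderiv ℝ (fun y => G fun j => u j y) x v =
      ∑ i, fderiv ℝ G (fun j => u j x) (Pi.single i 1) * fderiv ℝ (u i) x v := by
  have h : HasFDerivAt (fun y => G fun j => u j y) _ x :=
    HasFDerivAt.comp (f := fun y j => u j y) x hG.hasFDerivAt
      (hasFDerivAt_pi.2 fun i => (hu i).hasFDerivAt)
  rw [h.fderiv, ContinuousLinearMap.comp_apply]
  conv_lhs =>
    rw [← (Pi.basisFun ℝ ι).sum_repr (ContinuousLinearMap.pi (fun i => fderiv ℝ (u i) x) v)]
  simp [mul_comm]

/-- The energy density `∑ᵢ Φ(|∇uᵢ|²) - 2 G(u)` of `u = (uᵢ)ᵢ`, where `G` is the potential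
`H̃` of the system. -/
def energyDensity {E : Type*} [NormedAddCommGroup E] [InnerProductSpace ℝ E] [CompleteSpace E]
    (Φ : ℝ → ℝ) (G : (ι → ℝ) → ℝ) (u : ι → E → ℝ) (x : E) : ℝ :=
  (∑ i, Φ (‖∇ (u i) x‖ ^ 2)) - 2 * G fun j => u j x

section InnerProductSpace

variable {E : Type*} [NormedAddCommGroup E] [InnerProductSpace ℝ E] [CompleteSpace E]
  {u : ι → E → ℝ}

lemma sum_le_energyDensity {x : E} (hneg : G (fun j => u j x) ≤ 0) :
    ∑ i, Φ (‖∇ (u i) x‖ ^ 2) ≤ energyDensity Φ G u x := by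
  rw [energyDensity]
  linarith

lemma energyDensity_nonneg (hΦ : ∀ s, 0 ≤ s → 0 ≤ Φ s) {x : E} (hneg : G (fun j => u j x) ≤ 0) :
    0 ≤ energyDensity Φ G u x :=
  (Finset.sum_nonneg fun _ _ => hΦ _ (sq_nonneg _)).trans (sum_le_energyDensity hneg)

lemma contDiff_energyDensity (hΦ : ContDiff ℝ 1 Φ) (hG : ContDiff ℝ 1 G)
    (hu : ∀ i, ContDiff ℝ 2 (u i)) : ContDiff ℝ 1 (energyDensity Φ G u) :=
  (ContDiff.sum fun i _ => contDiff_comp_norm_gradient_sq hΦ (hu i)).sub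
    (contDiff_const.mul (hG.comp (contDiff_pi.2 fun i => (hu i).of_le one_le_two)))

variable [DecidableEq ι]

lemma fderiv_energyDensity_apply (hΦ : ContDiff ℝ 1 Φ) (hG : ContDiff ℝ 1 G)
    (hu : ∀ i, ContDiff ℝ 2 (u i)) (x v : E) :
    fderiv ℝ (energyDensity Φ G u) x v =
      ∑ i, (fderiv ℝ (fun y => Φ (‖∇ (u i) y‖ ^ 2)) x v
        - 2 * fderiv ℝ G (fun j => u j x) (Pi.single i 1) * ⟪∇ (u i) x, v⟫) := by
  have hΦu (i : ι) : DifferentiableAt ℝ (fun y => Φ (‖∇ (u i) y‖ ^ 2)) x :=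
    (contDiff_comp_norm_gradient_sq hΦ (hu i)).differentiable one_ne_zero x
  have hGd : DifferentiableAt ℝ G fun j => u j x := hG.differentiable one_ne_zero _
  have hud (i : ι) : DifferentiableAt ℝ (u i) x := (hu i).differentiable two_ne_zero x
  have hGu : DifferentiableAt ℝ (fun y => G fun j => u j y) x :=
    hGd.comp x (differentiableAt_pi.2 hud)
  have h : HasFDerivAt (energyDensity Φ G u) _ x :=
    (HasFDerivAt.fun_sum fun i _ => (hΦu i).hasFDerivAt).sub (hGu.hasFDerivAt.const_mul 2)
  rw [h.fderiv, Finset.sum_sub_distrib]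
  simp [fderiv_comp_pi_apply hGd hud, inner_gradient_left, Finset.mul_sum, mul_assoc]

end InnerProductSpace

variable [DecidableEq ι] {n : ℕ} {u : ι → EuclideanSpace ℝ (Fin n) → ℝ}

lemma sum_vdiv_dilationFlux (hΦ : ContDiff ℝ 2 Φ) (hG : ContDiff ℝ 1 G)
    (hu : ∀ i, ContDiff ℝ 2 (u i))
    (hsol : ∀ i x, -vdiv (flux Φ (u i)) x = fderiv ℝ G (fun j => u j x) (Pi.single i 1))
    (x : EuclideanSpace ℝ (Fin n)) :
    ∑ i, vdiv (dilationFlux Φ (u i)) x = fderiv ℝ (energyDensity Φ G u) x x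
      + ∑ i, 2 * ‖∇ (u i) x‖ ^ 2 * deriv Φ (‖∇ (u i) x‖ ^ 2) := by
  rw [fderiv_energyDensity_apply (hΦ.of_le one_le_two) hG hu, ← Finset.sum_add_distrib]
  refine Finset.sum_congr rfl fun i _ => ?_
  rw [vdiv_dilationFlux hΦ (hu i), ← hsol]
  ring

variable {α : ℝ}

lemma sum_vdiv_dilationFlux_le (hΦ : ContDiff ℝ 2 Φ) (hα₀ : 0 ≤ α)
    (hα : ∀ s, 0 ≤ s → 2 * s * deriv Φ s ≤ α * Φ s) (hG : ContDiff ℝ 1 G)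
    (hu : ∀ i, ContDiff ℝ 2 (u i))
    (hsol : ∀ i x, -vdiv (flux Φ (u i)) x = fderiv ℝ G (fun j => u j x) (Pi.single i 1))
    {x : EuclideanSpace ℝ (Fin n)} (hneg : G (fun j => u j x) ≤ 0) :
    ∑ i, vdiv (dilationFlux Φ (u i)) x ≤
      fderiv ℝ (energyDensity Φ G u) x x + α * energyDensity Φ G u x := by
  rw [sum_vdiv_dilationFlux hΦ hG hu hsol]
  gcongr
  calc ∑ i, 2 * ‖∇ (u i) x‖ ^ 2 * deriv Φ (‖∇ (u i) x‖ ^ 2)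
      ≤ ∑ i, α * Φ (‖∇ (u i) x‖ ^ 2) := Finset.sum_le_sum fun i _ => hα _ (sq_nonneg _)
    _ = α * ∑ i, Φ (‖∇ (u i) x‖ ^ 2) := (Finset.mul_sum ..).symm
    _ ≤ α * energyDensity Φ G u x := mul_le_mul_of_nonneg_left (sum_le_energyDensity hneg) hα₀

lemma monotoneOn_rpow_mul_energy (hΦ : ContDiff ℝ 2 Φ) (hΦ' : ∀ s, 0 ≤ s → 0 ≤ deriv Φ s)
    (hα₀ : 0 ≤ α) (hα : ∀ s, 0 ≤ s → 2 * s * deriv Φ s ≤ α * Φ s) (hG : ContDiff ℝ 1 G)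
    (hu : ∀ i, ContDiff ℝ 2 (u i))
    (hsol : ∀ i x, -vdiv (flux Φ (u i)) x = fderiv ℝ G (fun j => u j x) (Pi.single i 1))
    (hneg : ∀ x, G (fun j => u j x) ≤ 0) :
    MonotoneOn (fun r => r ^ (α - n) * ∫ x in ball 0 r, energyDensity Φ G u x) (Set.Ioi 0) := by
  have he := contDiff_energyDensity (hΦ.of_le one_le_two) hG hu
  have hdiv (i : ι) : Continuous (vdiv (dilationFlux Φ (u i))) :=
    continuous_vdiv (contDiff_dilationFlux hΦ (hu i))
  have hbalance (r : ℝ) : 0 ≤ ∫ x in ball 0 r,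
      (fderiv ℝ (energyDensity Φ G u) x x + α * energyDensity Φ G u x) :=
    calc 0 ≤ ∑ i, ∫ x in ball 0 r, vdiv (dilationFlux Φ (u i)) x :=
          Finset.sum_nonneg fun i _ => setIntegral_ball_vdiv_nonneg
            (contDiff_dilationFlux hΦ (hu i))
            (fun x => inner_dilationFlux_nonneg (hΦ' _ (sq_nonneg _))) r
      _ = ∫ x in ball 0 r, ∑ i, vdiv (dilationFlux Φ (u i)) x :=
          (integral_finsetSum _ fun i _ => integrableOn_ball_of_continuous (hdiv i) 0 r).symm
      _ ≤ _ := integral_mono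
          (integrableOn_ball_of_continuous (continuous_finsetSum _ fun i _ => hdiv i) 0 r)
          (integrableOn_ball_of_continuous (by fun_prop) 0 r)
          fun x => sum_vdiv_dilationFlux_le hΦ hα₀ hα hG hu hsol (hneg x)
  simpa only [finrank_euclideanSpace_fin] using
    monotoneOn_rpow_mul_setIntegral_ball (μ := volume) he α fun r _ => hbalance r

theorem energy_lower_bound_general (hΦ : ContDiff ℝ 2 Φ) (hΦpos : ∀ s, 0 < s → 0 < Φ s)
    (hΦ' : ∀ s, 0 < s → 0 ≤ deriv Φ s) (hα : ∀ s, 0 < s → 2 * s * deriv Φ s / Φ s ≤ α)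
    (hG : ContDiff ℝ 1 G) (hu : ∀ i, ContDiff ℝ 2 (u i))
    (hsol : ∀ i x, -vdiv (flux Φ (u i)) x = fderiv ℝ G (fun j => u j x) (Pi.single i 1))
    (hneg : ∀ x, G (fun j => u j x) ≤ 0) :
    (∀ r, 0 ≤ ∫ x in ball 0 r, energyDensity Φ G u x) ∧
      ∀ r R, 0 < r → r ≤ R →
        (∫ x in ball 0 r, energyDensity Φ G u x) * (R / r) ^ (n - α)
          ≤ ∫ x in ball 0 R, energyDensity Φ G u x := by
  have hcont : Continuous Φ := hΦ.continuous
  have hcont' : Continuous (deriv Φ) := hΦ.continuous_deriv one_le_two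
  have hΦ_nonneg (s : ℝ) : 0 ≤ s → 0 ≤ Φ s :=
    nonneg_of_forall_pos_nonneg hcont fun t ht => (hΦpos t ht).le
  have hΦ'_nonneg (s : ℝ) : 0 ≤ s → 0 ≤ deriv Φ s := nonneg_of_forall_pos_nonneg hcont' hΦ'
  have hα_mul (s : ℝ) (hs : 0 ≤ s) : 2 * s * deriv Φ s ≤ α * Φ s :=
    sub_nonneg.1 <| nonneg_of_forall_pos_nonneg (f := fun s => α * Φ s - 2 * s * deriv Φ s)
      (by fun_prop) (fun t ht => sub_nonneg.2 ((div_le_iff₀ (hΦpos t ht)).1 (hα t ht))) hs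
  have hα₀ : 0 ≤ α := (div_nonneg (mul_nonneg (by norm_num) (hΦ' 1 one_pos))
    (hΦpos 1 one_pos).le).trans (hα 1 one_pos)
  refine ⟨fun r => setIntegral_nonneg measurableSet_ball fun x _ =>
    energyDensity_nonneg hΦ_nonneg (hneg x), fun r R hr hrR => ?_⟩
  have hR : 0 < R := hr.trans_le hrR
  have hmono := monotoneOn_rpow_mul_energy hΦ hΦ'_nonneg hα₀ hα_mul hG hu hsol hneg hr hR hrR
  have hpow : (R / r) ^ (n - α) = r ^ (α - n) / R ^ (α - n) := by
    rw [Real.div_rpow hR.le hr.le, ← neg_sub α, Real.rpow_neg hR.le, Real.rpow_neg hr.le,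
      inv_div_inv]
  rwa [hpow, ← mul_div_assoc, div_le_iff₀ (Real.rpow_pos_of_pos hR _), mul_comm,
    mul_comm _ (R ^ _)]

end Energy

/-- **Energy lower bound**: for a solution of the quasilinear system
`-div(Φ'(|∇uᵢ|²)∇uᵢ) = Hᵢ(u)` with `H̃(u) ≤ 0` and `α ≥ 2sΦ'(s)/Φ(s)` for all `s > 0`,
with `C := ∫_{B_1} (∑ᵢ Φ(|∇uᵢ|²) - 2H̃(u)) ≥ 0` one has
`∫_{B_R} (∑ᵢ Φ(|∇uᵢ|²) - 2H̃(u)) ≥ C R^{n-α}` for all `R > 1`. -/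
theorem energy_lower_bound
    (n m : ℕ) (hn : 1 ≤ n) (hm : 2 ≤ m)
    (Φ : ℝ → ℝ) (hΦ : ContDiff ℝ 2 Φ) (hΦ0 : Φ 0 = 0)
    (hΦpos : ∀ s : ℝ, 0 < s → 0 < Φ s)
    (hΦ'pos : ∀ s : ℝ, 0 < s → 0 < deriv Φ s)
    (hΦell : ∀ s : ℝ, 0 < s → 0 < deriv Φ s + 2 * s * deriv (deriv Φ) s)
    (H : Fin m → (Fin m → ℝ) → ℝ) (hH : ∀ i, ContDiff ℝ 1 (H i))
    (Ht : (Fin m → ℝ) → ℝ) (hHt : ContDiff ℝ 2 Ht)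
    (hHtgrad : ∀ i y, fderiv ℝ Ht y (Pi.single i 1) = H i y)
    (u : Fin m → EuclideanSpace ℝ (Fin n) → ℝ)
    (hu : ∀ i, ContDiff ℝ 2 (u i))
    (hsol : ∀ i x, -vdiv (fun y => deriv Φ (‖gradient (u i) y‖ ^ 2) • gradient (u i) y) x
        = H i (fun j => u j x))
    (hHneg : ∀ x : EuclideanSpace ℝ (Fin n), Ht (fun j => u j x) ≤ 0)
    (α : ℝ) (hα : ∀ s : ℝ, 0 < s → 2 * s * deriv Φ s / Φ s ≤ α) :
    0 ≤ (∫ x in ball (0 : EuclideanSpace ℝ (Fin n)) 1,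
          ((∑ i, Φ (‖gradient (u i) x‖ ^ 2)) - 2 * Ht (fun j => u j x)))
    ∧ ∀ R : ℝ, 1 < R →
      (∫ x in ball (0 : EuclideanSpace ℝ (Fin n)) 1,
          ((∑ i, Φ (‖gradient (u i) x‖ ^ 2)) - 2 * Ht (fun j => u j x)))
        * R ^ ((n : ℝ) - α)
      ≤ ∫ x in ball (0 : EuclideanSpace ℝ (Fin n)) R,
          ((∑ i, Φ (‖gradient (u i) x‖ ^ 2)) - 2 * Ht (fun j => u j x)) := by
  have h := energy_lower_bound_general hΦ hΦpos (fun s hs => (hΦ'pos s hs).le) hα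
    (hHt.of_le one_le_two) hu (fun i x => (hsol i x).trans (hHtgrad i _).symm) hHneg
  exact ⟨h.1 1, fun R hR => by simpa only [div_one, energyDensity] using h.2 1 R one_pos hR.le⟩
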